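/- In the regime switching model, assume ν(a, ε) ≤ ε^{−α} ℓ(1/ε) for all a ∈ A and all ε ∈ (0,1], where α ∈ [0,1] and ℓ is a non-increasing slowly varying function. Then P{𝓛_n = r} ≤ c_1(α,r) E[ 1{L_n > r} L_n^{−(1−α)} ℓ(L_n) ] + c_2(α,r) P{L_n = r}, where c_1(α,r) = c(r) + (4^{1+r}/r!) (1+r)^{1+r−α} γ(1+r−α, 1/2), c_2(α,0) = 1, and for r ≥ 1, c_2(α,r) = min{1, p_∨^{r+1} r^α ℓ(r) + r^{−r}} with p_∨ = sup_{(a,k)} p_{a,k}, and γ(t,x) = ∫_0^x u^{t−1} e^{−u} du is the lower incomplete gamma function. -/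

import Mathlib

open MeasureTheory ENNReal Finset Filter

/-- The constant `c(r)`: `c(0) = e⁻¹` and `c(r) = e(1+r)/√π` for `r ≥ 1`. -/
noncomputable def cDGP (r : ℕ) : ℝ≥0∞ :=
  if r = 0 then ENNReal.ofReal (Real.exp (-1))
  else ENNReal.ofReal (Real.exp 1 * (1 + r) / Real.sqrt Real.pi)

open scoped Classical in
/-- The counting function `ν(a, ε) = Σ_k 1{p_{a,k} ≥ ε}` of the family `p`. -/
noncomputable def nuCount {A : Type*} (p : A → ℕ → ℝ≥0∞) (a : A) (ε : ℝ) : ℝ≥0∞ :=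
  ∑' k, if ENNReal.ofReal ε ≤ p a k then 1 else 0

/-- `ℓ` is slowly varying at `+∞`: `ℓ(cx)/ℓ(x) → 1` for every `c > 0`. -/
def SlowlyVarying (ℓ : ℝ → ℝ) : Prop :=
  ∀ c : ℝ, 0 < c → Tendsto (fun x => ℓ (c * x) / ℓ x) atTop (nhds 1)

/-- Lower incomplete gamma function `γ(t,x) = ∫_0^x u^{t−1}e^{−u} du`, valued in `ℝ≥0∞`
(it is `+∞` when `t ≤ 0`). -/
noncomputable def lowerGammaE (t x : ℝ) : ℝ≥0∞ :=
  ∫⁻ u in Set.Ioc (0 : ℝ) x, ENNReal.ofReal (u ^ (t - 1) * Real.exp (-u))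

/-- `c₁(α,r) = c(r) + (4^{1+r}/r!)(1+r)^{1+r−α} γ(1+r−α, 1/2)`. -/
noncomputable def cOne (α : ℝ) (r : ℕ) : ℝ≥0∞ :=
  cDGP r + (4 ^ (r + 1) / (r.factorial : ℝ≥0∞)) *
    ENNReal.ofReal ((1 + r : ℝ) ^ (1 + r - α)) * lowerGammaE (1 + r - α) (1 / 2)

/-- `c₂(α,r)`: `1` for `r = 0`, and `min{1, p_∨^{r+1} r^α ℓ(r) + r^{−r}}` for `r ≥ 1`. -/
noncomputable def cTwo (α : ℝ) (r : ℕ) (ℓ : ℝ → ℝ) (pmax : ℝ≥0∞) : ℝ≥0∞ :=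
  if r = 0 then 1
  else min 1 (pmax ^ (r + 1) * ENNReal.ofReal ((r : ℝ) ^ α * ℓ r) +
    ENNReal.ofReal ((r : ℝ) ^ (-(r : ℝ))))

/-!
Given the regimes and the current symbol `k` of the current regime `a`, the earlier symbols are
independent, and the ones drawn in regime `a` equal `k` with probability `x = p a k`. So if `a`
has occurred `m` times before, the number of repeats of `k` is binomial with parameters `m` and
`x`, and the conditional probability of `r` repeats is
`∑ x * (m.choose r) * x ^ r * (1 - x) ^ (m - r)` over the atoms `x` of regime `a`.

For `m > r` the atoms are split at `1 / m`. There are at most `m ^ α * ℓ m` atoms `x ≥ 1 / m`, and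
each contributes at most `c(r) / m`. For the small atoms the summand is at most
`m ^ r * x ^ (r + 1) / r!`; writing the sum of these powers as an integral of the counting
function, where `ℓ (1 / t) ≤ ℓ m` for `t ≤ 1 / m`, yields the incomplete gamma function. For
`m = r` the sum is `∑ x ^ (r + 1)`, which is split at `1 / r`.

The path of the process need not be measurable, but its point masses add up to `1`, which is
enough to make all its fibres null-measurable.
-/

section AtomSums

variable {K : Type*} {q : K → ℝ≥0∞}

/-- The regular-variation hypothesis on a discrete law `q`: its counting function
`ν(ε) = #{k | q k ≥ ε}` is at most `ε ^ (-α) * ℓ (1 / ε)` on `(0, 1]`. The cardinality is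
an `encard`, so that an infinite set of atoms is not counted as `0`. -/
def TailCountBound (q : K → ℝ≥0∞) (α : ℝ) (ℓ : ℝ → ℝ) : Prop :=
  ∀ ε ∈ Set.Ioc (0 : ℝ) 1,
    ({k | ENNReal.ofReal ε ≤ q k}.encard : ℝ≥0∞) ≤ ENNReal.ofReal (ε ^ (-α) * ℓ (1 / ε))

lemma nuCount_eq_encard {A : Type*} (p : A → ℕ → ℝ≥0∞) (a : A) (ε : ℝ) :
    nuCount p a ε = ({k | ENNReal.ofReal ε ≤ p a k}.encard : ℝ≥0∞) := by
  rw [← ENNReal.tsum_set_one, _root_.tsum_subtype _ fun _ => (1 : ℝ≥0∞), nuCount]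
  simp only [Set.indicator_apply, Set.mem_ofPred_eq]

lemma TailCountBound.encard_inv_le {α : ℝ} {ℓ : ℝ → ℝ} (hq : TailCountBound q α ℓ) {x : ℝ}
    (hx : 1 ≤ x) :
    ({k | ENNReal.ofReal x⁻¹ ≤ q k}.encard : ℝ≥0∞) ≤ ENNReal.ofReal (x ^ α * ℓ x) := by
  have hx0 : 0 < x := by positivity
  simpa [Real.inv_rpow hx0.le, Real.rpow_neg hx0.le] using
    hq x⁻¹ ⟨inv_pos.2 hx0, inv_le_one_of_one_le₀ hx⟩

lemma TailCountBound.encard_le_of_antitoneOn {α : ℝ} {ℓ : ℝ → ℝ} (hq : TailCountBound q α ℓ)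
    (hℓ : AntitoneOn ℓ (Set.Ioi 0)) {x t : ℝ} (hx : 1 ≤ x) (ht : t ∈ Set.Ioc 0 x⁻¹) :
    ({k | ENNReal.ofReal t ≤ q k}.encard : ℝ≥0∞) ≤
      ENNReal.ofReal (t ^ (-α)) * ENNReal.ofReal (ℓ x) := by
  obtain ⟨ht0, htx⟩ := ht
  have hx0 : 0 < x := by positivity
  have hle : x ≤ 1 / t := by
    rw [one_div]
    exact (le_inv_comm₀ hx0 ht0).2 htx
  refine (hq t ⟨ht0, htx.trans (inv_le_one_of_one_le₀ hx)⟩).trans ?_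
  rw [ENNReal.ofReal_mul (Real.rpow_nonneg ht0.le _)]
  gcongr
  exact hℓ hx0 (hx0.trans_le hle) hle

lemma tsum_le_encard_mul_add_tsum_lt {f : K → ℝ≥0∞} {ε c : ℝ≥0∞}
    (hf : ∀ k, ε ≤ q k → f k ≤ c) :
    ∑' k, f k ≤ {k | ε ≤ q k}.encard * c + ∑' k : {k | q k < ε}, f k := by
  have hcompl : {k | ε ≤ q k}ᶜ = {k | q k < ε} := by
    ext k
    simp
  rw [← ENNReal.summable.tsum_add_tsum_compl (s := {k | ε ≤ q k}) ENNReal.summable, hcompl,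
    ← ENNReal.tsum_set_const]
  gcongr with k
  exact hf k k.2

/-- The layer-cake formula for the counting measure on the atoms below `η`. -/
lemma tsum_rpow_lt_le_lintegral_encard (hq : ∀ k, q k ≠ ∞) {p : ℝ} (hp : 0 < p) (η : ℝ) :
    ∑' k : {k | q k < ENNReal.ofReal η}, q k ^ p ≤
      ENNReal.ofReal p * ∫⁻ t in Set.Ioc 0 η,
        {k | ENNReal.ofReal t ≤ q k}.encard * ENNReal.ofReal (t ^ (p - 1)) := by
  let _ : MeasurableSpace K := ⊤
  let S : Set K := {k | q k < ENNReal.ofReal η}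
  have hcake := lintegral_rpow_eq_lintegral_meas_le_mul (Measure.count.restrict S)
    (f := fun k => (q k).toReal) (.of_forall fun _ => ENNReal.toReal_nonneg)
    (Measurable.of_discrete).aemeasurable hp
  have hlhs : ∫⁻ k in S, ENNReal.ofReal ((q k).toReal ^ p) ∂Measure.count =
      ∑' k : S, q k ^ p := by
    rw [← lintegral_indicator .of_discrete, lintegral_count, _root_.tsum_subtype S fun k => q k ^ p]
    simp only [← ENNReal.ofReal_rpow_of_nonneg ENNReal.toReal_nonneg hp.le,
      ENNReal.ofReal_toReal (hq _)]
  rw [← hlhs, hcake]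
  refine mul_le_mul_right ?_ _
  calc ∫⁻ t in Set.Ioi 0, Measure.count.restrict S {k | t ≤ (q k).toReal} *
          ENNReal.ofReal (t ^ (p - 1))
      ≤ ∫⁻ t in Set.Ioi 0, (Set.Ioc 0 η).indicator (fun t =>
          {k | ENNReal.ofReal t ≤ q k}.encard * ENNReal.ofReal (t ^ (p - 1))) t := by
        refine setLIntegral_mono' measurableSet_Ioi fun t (ht : 0 < t) => ?_
        rw [Measure.restrict_apply .of_discrete, Measure.count_apply .of_discrete]
        simp only [← ENNReal.ofReal_le_iff_le_toReal (hq _)]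
        by_cases htη : t ≤ η
        · rw [Set.indicator_of_mem (Set.mem_Ioc.2 ⟨ht, htη⟩)]
          gcongr
          exact Set.inter_subset_left
        · have hempty : {k | ENNReal.ofReal t ≤ q k} ∩ S = ∅ := by
            ext k
            have : ENNReal.ofReal η ≤ ENNReal.ofReal t :=
              ENNReal.ofReal_le_ofReal (not_le.1 htη).le
            grind
          simp [hempty]
    _ = ∫⁻ t in Set.Ioc 0 η ∩ Set.Ioi 0,
          {k | ENNReal.ofReal t ≤ q k}.encard * ENNReal.ofReal (t ^ (p - 1)) :=
        setLIntegral_indicator measurableSet_Ioc _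
    _ ≤ _ := lintegral_mono_set Set.inter_subset_left

lemma setLIntegral_Ioc_comp_mul_left {c : ℝ} (hc : 0 < c) (b : ℝ) (f : ℝ → ℝ≥0∞) :
    ∫⁻ t in Set.Ioc 0 (c * b), f t =
      ENNReal.ofReal c * ∫⁻ u in Set.Ioc 0 b, f (c * u) := by
  have himage : (fun u => c * u) '' Set.Ioc 0 b = Set.Ioc 0 (c * b) := by
    rw [Set.image_mul_left_Ioc hc, mul_zero]
  rw [← himage, lintegral_image_eq_lintegral_abs_deriv_mul measurableSet_Ioc
    (fun u _ => by simpa using ((hasDerivAt_id u).const_mul c).hasDerivWithinAt)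
    (mul_right_injective₀ hc.ne').injOn, abs_of_pos hc,
    lintegral_const_mul' _ _ ENNReal.ofReal_ne_top]

lemma setLIntegral_rpow_le_lowerGammaE (s : ℝ) {η : ℝ} (hη : 0 < η) :
    ∫⁻ t in Set.Ioc 0 η, ENNReal.ofReal (t ^ (s - 1)) ≤
      ENNReal.ofReal (2 * (2 * η) ^ s) * lowerGammaE s (1 / 2) := by
  have h2η : 0 < 2 * η := by positivity
  calc ∫⁻ t in Set.Ioc 0 η, ENNReal.ofReal (t ^ (s - 1))
      = ENNReal.ofReal (2 * η) *
          ∫⁻ u in Set.Ioc 0 (1 / 2), ENNReal.ofReal ((2 * η * u) ^ (s - 1)) := by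
        rw [← setLIntegral_Ioc_comp_mul_left h2η _ fun t => ENNReal.ofReal (t ^ (s - 1)),
          mul_one_div, mul_div_cancel_left₀ η two_ne_zero]
    _ ≤ ENNReal.ofReal (2 * η) * ∫⁻ u in Set.Ioc 0 (1 / 2),
          ENNReal.ofReal (2 * (2 * η) ^ (s - 1)) *
            ENNReal.ofReal (u ^ (s - 1) * Real.exp (-u)) := by
        refine mul_le_mul_right (setLIntegral_mono' measurableSet_Ioc fun u ⟨hu0, hu⟩ => ?_) _
        have hexp : 1 ≤ 2 * Real.exp (-u) := by linarith [Real.add_one_le_exp (-u)]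
        rw [← ENNReal.ofReal_mul (by positivity), Real.mul_rpow h2η.le hu0.le]
        refine ENNReal.ofReal_le_ofReal ?_
        calc (2 * η) ^ (s - 1) * u ^ (s - 1)
            ≤ (2 * η) ^ (s - 1) * u ^ (s - 1) * (2 * Real.exp (-u)) :=
              le_mul_of_one_le_right (by positivity) hexp
          _ = 2 * (2 * η) ^ (s - 1) * (u ^ (s - 1) * Real.exp (-u)) := by ring
    _ = ENNReal.ofReal (2 * (2 * η) ^ s) * lowerGammaE s (1 / 2) := by
        rw [lintegral_const_mul' _ _ ENNReal.ofReal_ne_top, ← mul_assoc,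
          ← ENNReal.ofReal_mul h2η.le, Real.rpow_sub_one h2η.ne', lowerGammaE]
        congr 2
        field_simp

lemma TailCountBound.tsum_rpow_lt_le {α : ℝ} {ℓ : ℝ → ℝ} (hq : TailCountBound q α ℓ)
    (hℓ : AntitoneOn ℓ (Set.Ioi 0)) (hfin : ∀ k, q k ≠ ∞) {x p : ℝ} (hx : 1 ≤ x) (hp : 0 < p) :
    ∑' k : {k | q k < ENNReal.ofReal x⁻¹}, q k ^ p ≤
      ENNReal.ofReal (p * (2 * (2 * x⁻¹) ^ (p - α))) * ENNReal.ofReal (ℓ x) *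
        lowerGammaE (p - α) (1 / 2) := by
  have hx0 : 0 < x := by positivity
  calc ∑' k : {k | q k < ENNReal.ofReal x⁻¹}, q k ^ p
      ≤ ENNReal.ofReal p * ∫⁻ t in Set.Ioc 0 x⁻¹,
          {k | ENNReal.ofReal t ≤ q k}.encard * ENNReal.ofReal (t ^ (p - 1)) :=
        tsum_rpow_lt_le_lintegral_encard hfin hp x⁻¹
    _ ≤ ENNReal.ofReal p * ∫⁻ t in Set.Ioc 0 x⁻¹,
          ENNReal.ofReal (ℓ x) * ENNReal.ofReal (t ^ (p - α - 1)) := by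
        refine mul_le_mul_right (setLIntegral_mono' measurableSet_Ioc fun t ht => ?_) _
        have hpow : t ^ (p - α - 1) = t ^ (-α) * t ^ (p - 1) := by
          rw [← Real.rpow_add ht.1]
          ring_nf
        rw [hpow, ENNReal.ofReal_mul (Real.rpow_nonneg ht.1.le _), ← mul_assoc,
          mul_comm (ENNReal.ofReal (ℓ x))]
        gcongr
        exact hq.encard_le_of_antitoneOn hℓ hx ht
    _ ≤ ENNReal.ofReal p * (ENNReal.ofReal (ℓ x) *
          (ENNReal.ofReal (2 * (2 * x⁻¹) ^ (p - α)) * lowerGammaE (p - α) (1 / 2))) := by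
        rw [lintegral_const_mul' _ _ ENNReal.ofReal_ne_top]
        gcongr
        exact setLIntegral_rpow_le_lowerGammaE _ (inv_pos.2 hx0)
    _ = _ := by
        rw [ENNReal.ofReal_mul hp.le]
        ring

end AtomSums

section BinomialMass

/-- The binomial probability of exactly `r` successes in `m` trials of success probability `x`. -/
noncomputable def binomialMass (m r : ℕ) (x : ℝ≥0∞) : ℝ≥0∞ :=
  m.choose r * x ^ r * (1 - x) ^ (m - r)

lemma binomialMass_le_one (m r : ℕ) {x : ℝ≥0∞} (hx : x ≤ 1) : binomialMass m r x ≤ 1 := by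
  obtain hmr | hrm := lt_or_ge m r
  · simp [binomialMass, Nat.choose_eq_zero_of_lt hmr]
  calc binomialMass m r x = x ^ r * (1 - x) ^ (m - r) * m.choose r := by
        rw [binomialMass]
        ring
    _ ≤ ∑ i ∈ range (m + 1), x ^ i * (1 - x) ^ (m - i) * m.choose i :=
        Finset.single_le_sum (f := fun i => x ^ i * (1 - x) ^ (m - i) * (m.choose i : ℝ≥0∞))
          (fun _ _ => zero_le) (Finset.mem_range_succ_iff.2 hrm)
    _ = (x + (1 - x)) ^ m := (add_pow x (1 - x) m).symm
    _ = 1 := by rw [add_tsub_cancel_of_le hx, one_pow]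

lemma add_one_mul_self_mul_binomialMass (m r : ℕ) (x : ℝ≥0∞) :
    (m + 1) * (x * binomialMass m r x) = (r + 1) * binomialMass (m + 1) (r + 1) x := by
  have hchoose : ((m : ℝ≥0∞) + 1) * m.choose r = (m + 1).choose (r + 1) * (r + 1) := by
    exact_mod_cast Nat.add_one_mul_choose_eq m r
  calc (m + 1) * (x * binomialMass m r x)
      = (m + 1) * m.choose r * x ^ (r + 1) * (1 - x) ^ (m - r) := by
        rw [binomialMass]
        ring
    _ = (r + 1) * binomialMass (m + 1) (r + 1) x := by
        rw [hchoose, binomialMass, Nat.add_sub_add_right]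
        ring

lemma mul_self_mul_one_sub_pow_le (m : ℕ) {x : ℝ} (hx : x ≤ 1) :
    m * (x * (1 - x) ^ m) ≤ Real.exp (-1) := by
  have hpow : (1 - x) ^ m ≤ Real.exp (-(m * x)) := by
    calc (1 - x) ^ m ≤ Real.exp (-x) ^ m :=
          pow_le_pow_left₀ (sub_nonneg.2 hx) (Real.one_sub_le_exp_neg x) m
      _ = Real.exp (-(m * x)) := by
          rw [← Real.exp_nat_mul]
          ring_nf
  have hmx : m * x ≤ Real.exp (m * x - 1) := by linarith [Real.add_one_le_exp (m * x - 1)]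
  calc m * (x * (1 - x) ^ m) = m * x * (1 - x) ^ m := by ring
    _ ≤ Real.exp (m * x - 1) * Real.exp (-(m * x)) :=
        mul_le_mul hmx hpow (pow_nonneg (sub_nonneg.2 hx) m) (Real.exp_pos _).le
    _ = Real.exp (-1) := by
        rw [← Real.exp_add]
        ring_nf

lemma add_one_le_cDGP {r : ℕ} (hr : r ≠ 0) : (r + 1 : ℝ≥0∞) ≤ cDGP r := by
  have hsqrt : Real.sqrt Real.pi ≤ Real.exp 1 := by
    calc Real.sqrt Real.pi ≤ 2 := Real.sqrt_le_iff.2 ⟨by norm_num, by linarith [Real.pi_le_four]⟩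
      _ ≤ Real.exp 1 := by linarith [Real.add_one_le_exp 1]
  have hcast : (r + 1 : ℝ≥0∞) = ENNReal.ofReal (1 + r) := by
    rw [ENNReal.ofReal_add zero_le_one r.cast_nonneg, ENNReal.ofReal_one, ENNReal.ofReal_natCast,
      add_comm]
  rw [cDGP, if_neg hr, hcast]
  gcongr
  rw [le_div_iff₀ (Real.sqrt_pos.2 Real.pi_pos), mul_comm]
  gcongr

lemma natCast_mul_self_mul_binomialMass_le (m r : ℕ) {x : ℝ≥0∞} (hx : x ≤ 1) :
    m * (x * binomialMass m r x) ≤ cDGP r := by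
  rcases eq_or_ne r 0 with rfl | hr
  · lift x to NNReal using ne_top_of_le_ne_top one_ne_top hx
    have hx1 : (x : ℝ) ≤ 1 := by exact_mod_cast hx
    have hreal := ENNReal.ofReal_le_ofReal (mul_self_mul_one_sub_pow_le m hx1)
    rw [ENNReal.ofReal_mul m.cast_nonneg, ENNReal.ofReal_mul x.coe_nonneg,
      ENNReal.ofReal_pow (sub_nonneg.2 hx1), ENNReal.ofReal_sub _ x.coe_nonneg] at hreal
    simpa [binomialMass, cDGP] using hreal
  · calc m * (x * binomialMass m r x)
        ≤ (m + 1) * (x * binomialMass m r x) := by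
          gcongr
          exact le_self_add
      _ = (r + 1) * binomialMass (m + 1) (r + 1) x := add_one_mul_self_mul_binomialMass m r x
      _ ≤ (r + 1) * 1 := by
          gcongr
          exact binomialMass_le_one _ _ hx
      _ ≤ cDGP r := by
          rw [mul_one]
          exact add_one_le_cDGP hr

lemma binomialMass_le_pow_div_factorial_mul_pow (m r : ℕ) (x : ℝ≥0∞) :
    binomialMass m r x ≤ m ^ r / r.factorial * x ^ r := by
  have hchoose : (m.choose r : ℝ≥0∞) ≤ m ^ r / r.factorial := by
    rw [ENNReal.le_div_iff_mul_le (.inl (by positivity)) (.inl (ENNReal.natCast_ne_top _)),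
      mul_comm]
    exact_mod_cast (Nat.descFactorial_eq_factorial_mul_choose m r).symm.trans_le
      (Nat.descFactorial_le_pow m r)
  calc binomialMass m r x ≤ m ^ r / r.factorial * x ^ r * 1 := by
        rw [binomialMass]
        gcongr
        exact pow_le_one₀ zero_le tsub_le_self
    _ = m ^ r / r.factorial * x ^ r := mul_one _

lemma tsum_mul_binomialMass_le_tsum_rpow {K : Type*} (q : K → ℝ≥0∞) (m r : ℕ) :
    ∑' k, q k * binomialMass m r (q k) ≤ m ^ r / r.factorial * ∑' k, q k ^ (r + 1 : ℝ) := by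
  rw [← ENNReal.tsum_mul_left]
  refine ENNReal.tsum_le_tsum fun k => ?_
  calc q k * binomialMass m r (q k)
      ≤ q k * (m ^ r / r.factorial * q k ^ r) := by
        gcongr
        exact binomialMass_le_pow_div_factorial_mul_pow m r _
    _ = m ^ r / r.factorial * q k ^ (r + 1 : ℝ) := by
        rw [← Nat.cast_add_one, ENNReal.rpow_natCast]
        ring

end BinomialMass

section RepeatBounds

variable {K : Type*} {q : K → ℝ≥0∞} {α : ℝ} {ℓ : ℝ → ℝ}

lemma two_mul_add_one_mul_two_rpow_le (hα : α ∈ Set.Icc (0 : ℝ) 1) (r : ℕ) :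
    2 * ((r : ℝ) + 1) * 2 ^ (1 + r - α) ≤ 4 ^ (r + 1) * (1 + r : ℝ) ^ (1 + r - α) := by
  have hpow : (2 : ℝ) ^ (1 + r - α) ≤ 2 ^ (r + 1) := by
    rw [← Real.rpow_natCast]
    refine Real.rpow_le_rpow_of_exponent_le one_le_two ?_
    push_cast
    linarith [hα.1]
  have htwo : (2 : ℝ) ≤ 2 ^ (r + 1) := le_self_pow₀ one_le_two r.succ_ne_zero
  have hbase : (r : ℝ) + 1 ≤ (1 + r : ℝ) ^ (1 + r - α) := by
    rcases r.eq_zero_or_pos with rfl | hr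
    · simp
    · have hr1 : (1 : ℝ) ≤ r := by exact_mod_cast hr
      rw [add_comm]
      exact Real.self_le_rpow_of_one_le (by linarith) (by linarith [hα.2])
  calc 2 * ((r : ℝ) + 1) * 2 ^ (1 + r - α) = 2 * 2 ^ (1 + r - α) * (r + 1) := by ring
    _ ≤ 2 ^ (r + 1) * 2 ^ (r + 1) * (1 + r : ℝ) ^ (1 + r - α) := by gcongr
    _ = 4 ^ (r + 1) * (1 + r : ℝ) ^ (1 + r - α) := by
        rw [← mul_pow]
        norm_num

lemma pow_mul_two_div_rpow_le (hα : α ∈ Set.Icc (0 : ℝ) 1) (r : ℕ) {x : ℝ} (hx : 0 < x) :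
    x ^ r * ((r + 1) * (2 * (2 * x⁻¹) ^ (r + 1 - α))) ≤
      4 ^ (r + 1) * (1 + r : ℝ) ^ (1 + r - α) * x ^ (-(1 - α)) := by
  have hxpow : x ^ r * x⁻¹ ^ (1 + r - α) = x ^ (-(1 - α)) := by
    rw [← Real.rpow_natCast, Real.inv_rpow hx.le, ← Real.rpow_neg hx.le, ← Real.rpow_add hx]
    ring_nf
  calc x ^ r * ((r + 1) * (2 * (2 * x⁻¹) ^ (r + 1 - α)))
      = 2 * (r + 1) * 2 ^ (1 + r - α) * (x ^ r * x⁻¹ ^ (1 + r - α)) := by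
        rw [add_comm (r : ℝ) 1, Real.mul_rpow zero_le_two (inv_nonneg.2 hx.le)]
        ring
    _ ≤ 4 ^ (r + 1) * (1 + r : ℝ) ^ (1 + r - α) * x ^ (-(1 - α)) := by
        rw [hxpow]
        exact mul_le_mul_of_nonneg_right (two_mul_add_one_mul_two_rpow_le hα r) (by positivity)

lemma TailCountBound.encard_mul_le (hν : TailCountBound q α ℓ) {m : ℕ} (hm : 1 ≤ m) :
    {k | ENNReal.ofReal (m : ℝ)⁻¹ ≤ q k}.encard * (m : ℝ≥0∞)⁻¹ ≤
      ENNReal.ofReal ((m : ℝ) ^ (-(1 - α)) * ℓ m) := by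
  have hm0 : (0 : ℝ) < m := by exact_mod_cast hm
  have hinv : (m : ℝ≥0∞)⁻¹ = ENNReal.ofReal (m : ℝ)⁻¹ := by
    rw [ENNReal.ofReal_inv_of_pos hm0, ENNReal.ofReal_natCast]
  calc {k | ENNReal.ofReal (m : ℝ)⁻¹ ≤ q k}.encard * (m : ℝ≥0∞)⁻¹
      ≤ ENNReal.ofReal ((m : ℝ) ^ α * ℓ m) * ENNReal.ofReal (m : ℝ)⁻¹ := by
        rw [hinv]
        gcongr
        exact hν.encard_inv_le (by exact_mod_cast hm)
    _ = ENNReal.ofReal ((m : ℝ) ^ (-(1 - α)) * ℓ m) := by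
        rw [← ENNReal.ofReal_mul' (inv_nonneg.2 hm0.le), show -(1 - α) = α - 1 by ring,
          Real.rpow_sub_one hm0.ne']
        ring_nf

lemma TailCountBound.tsum_mul_binomialMass_lt_le (hν : TailCountBound q α ℓ)
    (hfin : ∀ k, q k ≠ ∞) (hα : α ∈ Set.Icc (0 : ℝ) 1) (hℓ : AntitoneOn ℓ (Set.Ioi 0))
    {m : ℕ} (hm : 1 ≤ m) (r : ℕ) :
    ∑' k : {k | q k < ENNReal.ofReal (m : ℝ)⁻¹}, q k * binomialMass m r (q k) ≤
      4 ^ (r + 1) / r.factorial * ENNReal.ofReal ((1 + r : ℝ) ^ (1 + r - α)) *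
        lowerGammaE (1 + r - α) (1 / 2) * ENNReal.ofReal ((m : ℝ) ^ (-(1 - α)) * ℓ m) := by
  have hm0 : (0 : ℝ) < m := by exact_mod_cast hm
  have hconst : (m : ℝ≥0∞) ^ r * ENNReal.ofReal ((r + 1) * (2 * (2 * (m : ℝ)⁻¹) ^ (r + 1 - α))) ≤
      4 ^ (r + 1) * ENNReal.ofReal ((1 + r : ℝ) ^ (1 + r - α)) *
        ENNReal.ofReal ((m : ℝ) ^ (-(1 - α))) := by
    have h := ENNReal.ofReal_le_ofReal (pow_mul_two_div_rpow_le hα r hm0)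
    rwa [ENNReal.ofReal_mul (p := (m : ℝ) ^ r) (by positivity),
      ENNReal.ofReal_mul (p := 4 ^ (r + 1) * (1 + r : ℝ) ^ (1 + r - α)) (by positivity),
      ENNReal.ofReal_mul (p := 4 ^ (r + 1)) (by positivity), ENNReal.ofReal_pow hm0.le,
      ENNReal.ofReal_pow zero_le_four, ENNReal.ofReal_natCast, ENNReal.ofReal_ofNat] at h
  calc ∑' k : {k | q k < ENNReal.ofReal (m : ℝ)⁻¹}, q k * binomialMass m r (q k)
      ≤ m ^ r / r.factorial *
          (ENNReal.ofReal ((r + 1) * (2 * (2 * (m : ℝ)⁻¹) ^ (r + 1 - α))) *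
            ENNReal.ofReal (ℓ m) * lowerGammaE (r + 1 - α) (1 / 2)) := by
        refine (tsum_mul_binomialMass_le_tsum_rpow _ m r).trans ?_
        gcongr
        exact hν.tsum_rpow_lt_le hℓ hfin (by exact_mod_cast hm) (by positivity)
    _ = m ^ r * ENNReal.ofReal ((r + 1) * (2 * (2 * (m : ℝ)⁻¹) ^ (r + 1 - α))) *
          ((r.factorial : ℝ≥0∞)⁻¹ * ENNReal.ofReal (ℓ m) *
            lowerGammaE (1 + r - α) (1 / 2)) := by
        rw [div_eq_mul_inv (_ ^ r), add_comm (r : ℝ) 1]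
        ring
    _ ≤ 4 ^ (r + 1) * ENNReal.ofReal ((1 + r : ℝ) ^ (1 + r - α)) *
          ENNReal.ofReal ((m : ℝ) ^ (-(1 - α))) *
          ((r.factorial : ℝ≥0∞)⁻¹ * ENNReal.ofReal (ℓ m) *
            lowerGammaE (1 + r - α) (1 / 2)) := by gcongr
    _ = _ := by
        rw [ENNReal.ofReal_mul (Real.rpow_nonneg hm0.le _), div_eq_mul_inv (4 ^ (r + 1))]
        ring

lemma TailCountBound.tsum_mul_binomialMass_le_cOne (hν : TailCountBound q α ℓ)
    (hq : ∑' k, q k = 1) (hα : α ∈ Set.Icc (0 : ℝ) 1) (hℓ : AntitoneOn ℓ (Set.Ioi 0))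
    {m : ℕ} (hm : 1 ≤ m) (r : ℕ) :
    ∑' k, q k * binomialMass m r (q k) ≤
      cOne α r * ENNReal.ofReal ((m : ℝ) ^ (-(1 - α)) * ℓ m) := by
  have hle (k : K) : q k ≤ 1 := hq ▸ ENNReal.le_tsum k
  have hmass (k : K) : q k * binomialMass m r (q k) ≤ (m : ℝ≥0∞)⁻¹ * cDGP r := by
    rw [mul_comm (m : ℝ≥0∞)⁻¹, ← div_eq_mul_inv,
      ENNReal.le_div_iff_mul_le (.inl (by positivity)) (.inl (ENNReal.natCast_ne_top m)), mul_comm]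
    exact natCast_mul_self_mul_binomialMass_le m r (hle k)
  calc ∑' k, q k * binomialMass m r (q k)
      ≤ {k | ENNReal.ofReal (m : ℝ)⁻¹ ≤ q k}.encard * ((m : ℝ≥0∞)⁻¹ * cDGP r) +
          ∑' k : {k | q k < ENNReal.ofReal (m : ℝ)⁻¹}, q k * binomialMass m r (q k) :=
        tsum_le_encard_mul_add_tsum_lt fun k _ => hmass k
    _ ≤ ENNReal.ofReal ((m : ℝ) ^ (-(1 - α)) * ℓ m) * cDGP r + _ := by
        rw [← mul_assoc]
        exact add_le_add (mul_le_mul_left (hν.encard_mul_le hm) _)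
          (hν.tsum_mul_binomialMass_lt_le (fun k => ne_top_of_le_ne_top one_ne_top (hle k))
            hα hℓ hm r)
    _ = cOne α r * ENNReal.ofReal ((m : ℝ) ^ (-(1 - α)) * ℓ m) := by
        rw [cOne]
        ring

lemma tsum_pow_succ_le_encard_mul_add_pow (hq : ∑' k, q k = 1) {M : ℝ≥0∞}
    (hM : ∀ k, q k ≤ M) (ε : ℝ≥0∞) (r : ℕ) :
    ∑' k, q k ^ (r + 1) ≤ M ^ (r + 1) * {k | ε ≤ q k}.encard + ε ^ r := by
  calc ∑' k, q k ^ (r + 1)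
      ≤ {k | ε ≤ q k}.encard * M ^ (r + 1) + ∑' k : {k | q k < ε}, q k ^ (r + 1) :=
        tsum_le_encard_mul_add_tsum_lt fun k _ => pow_le_pow_left' (hM k) _
    _ ≤ M ^ (r + 1) * {k | ε ≤ q k}.encard + ∑' k : {k | q k < ε}, ε ^ r * q k := by
        rw [mul_comm]
        gcongr with k
        rw [pow_succ]
        gcongr
        exact k.2.le
    _ ≤ M ^ (r + 1) * {k | ε ≤ q k}.encard + ε ^ r := by
        rw [ENNReal.tsum_mul_left]
        gcongr
        exact mul_le_of_le_one_right'
          (hq ▸ ENNReal.tsum_comp_le_tsum_of_injective Subtype.val_injective q)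

lemma TailCountBound.tsum_pow_succ_le_cTwo (hν : TailCountBound q α ℓ) (hq : ∑' k, q k = 1)
    {M : ℝ≥0∞} (hM : ∀ k, q k ≤ M) (r : ℕ) :
    ∑' k, q k ^ (r + 1) ≤ cTwo α r ℓ M := by
  have hone : ∑' k, q k ^ (r + 1) ≤ 1 := by
    rw [← hq]
    gcongr with k
    exact pow_le_of_le_one zero_le (hq ▸ ENNReal.le_tsum k) r.succ_ne_zero
  rw [cTwo]
  split_ifs with hr
  · exact hone
  refine le_min hone
    ((tsum_pow_succ_le_encard_mul_add_pow hq hM (ENNReal.ofReal (r : ℝ)⁻¹) r).trans ?_)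
  gcongr
  · exact hν.encard_inv_le (by exact_mod_cast Nat.one_le_iff_ne_zero.2 hr)
  · rw [← ENNReal.ofReal_pow (by positivity), Real.rpow_neg r.cast_nonneg, Real.rpow_natCast,
      inv_pow]

/-- The left-hand side is the conditional probability of `r` repeats, given that the current
regime, with atoms `q`, has occurred `m` times before. -/
lemma TailCountBound.tsum_mul_binomialMass_le (hν : TailCountBound q α ℓ)
    (hq : ∑' k, q k = 1) (hα : α ∈ Set.Icc (0 : ℝ) 1) (hℓ : AntitoneOn ℓ (Set.Ioi 0))
    {M : ℝ≥0∞} (hM : ∀ k, q k ≤ M) (m r : ℕ) :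
    ∑' k, q k * binomialMass m r (q k) ≤
      cOne α r * (if r < m then ENNReal.ofReal ((m : ℝ) ^ (-(1 - α)) * ℓ m) else 0) +
        cTwo α r ℓ M * (if m = r then 1 else 0) := by
  obtain hrm | rfl | hmr := lt_trichotomy r m
  · simpa [hrm, hrm.ne'] using
      hν.tsum_mul_binomialMass_le_cOne hq hα hℓ (Nat.one_le_of_lt hrm) r
  · simpa [binomialMass, pow_succ'] using hν.tsum_pow_succ_le_cTwo hq hM r
  · simp [binomialMass, Nat.choose_eq_zero_of_lt hmr]

end RepeatBounds

section ProductSums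

lemma tsum_eq_tsum_tsum_snoc {β : Type*} {n : ℕ} (F : (Fin (n + 1) → β) → ℝ≥0∞) :
    ∑' k, F k = ∑' b, ∑' k' : Fin n → β, F (Fin.snoc k' b) := by
  rw [← (Fin.snocEquiv fun _ => β).tsum_eq]
  exact ENNReal.tsum_prod (f := fun b k' => F (Fin.snoc k' b))

variable {ι β : Type*} [Fintype ι]

lemma tsum_prod_eq_prod_tsum (f : ι → β → ℝ≥0∞) :
    ∑' k : ι → β, ∏ i, f i (k i) = ∏ i, ∑' b, f i b := by
  have hfin (n : ℕ) (f : Fin n → β → ℝ≥0∞) :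
      ∑' k : Fin n → β, ∏ i, f i (k i) = ∏ i, ∑' b, f i b := by
    induction n with
    | zero => simp [tsum_fintype]
    | succ n ih =>
      simp only [tsum_eq_tsum_tsum_snoc, Fin.prod_univ_castSucc, Fin.snoc_castSucc, Fin.snoc_last,
        ENNReal.tsum_mul_left, ENNReal.tsum_mul_right, ih]
  let e := Fintype.equivFin ι
  rw [← (e.symm.arrowCongr (Equiv.refl β)).tsum_eq, ← e.symm.prod_comp, ← hfin]
  refine tsum_congr fun k => ?_
  rw [← e.symm.prod_comp]
  simp

lemma tsum_prod_mul_ite_filter_eq [DecidableEq ι] [DecidableEq β] {q : ι → β → ℝ≥0∞}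
    (hq : ∀ i, ∑' b, q i b = 1) {B S : Finset ι} (hS : S ⊆ B) {j : β} {x : ℝ≥0∞}
    (hx : ∀ i ∈ B, q i j = x) :
    ∑' k : ι → β, (∏ i, q i (k i)) * (if {i ∈ B | k i = j} = S then 1 else 0) =
      x ^ #S * (1 - x) ^ (#B - #S) := by
  have hne (i : ι) : ∑' b, (if b = j then 0 else q i b) = 1 - q i j := by
    have hfin : q i j ≠ ∞ := ne_top_of_le_ne_top one_ne_top (hq i ▸ ENNReal.le_tsum j)
    rw [← hq i, ENNReal.tsum_eq_add_tsum_ite (f := q i) j, ENNReal.add_sub_cancel_left hfin]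
    congr!
  have hfactor (i : ι) : ∑' b, (if i ∈ B → (b = j ↔ i ∈ S) then q i b else 0) =
      if i ∈ B then if i ∈ S then x else 1 - x else 1 := by
    by_cases hiB : i ∈ B
    · by_cases hiS : i ∈ S
      · simp [hiB, hiS, hx]
      · simp [hiB, hiS, ← hx i hiB, ← hne i]
    · simp [hiB, hq]
  calc ∑' k : ι → β, (∏ i, q i (k i)) * (if {i ∈ B | k i = j} = S then 1 else 0)
      = ∑' k : ι → β, ∏ i, if i ∈ B → (k i = j ↔ i ∈ S) then q i (k i) else 0 := by
        refine tsum_congr fun k => ?_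
        rw [prod_ite_zero, mul_ite, mul_one, mul_zero]
        congr 1
        simp only [Finset.ext_iff, mem_filter, mem_univ, true_imp_iff, eq_iff_iff]
        exact forall_congr' fun i => by grind
    _ = ∏ i, if i ∈ B then if i ∈ S then x else 1 - x else 1 := by
        rw [tsum_prod_eq_prod_tsum fun i b => if i ∈ B → (b = j ↔ i ∈ S) then q i b else 0]
        exact prod_congr rfl fun i _ => hfactor i
    _ = x ^ #S * (1 - x) ^ (#B - #S) := by
        rw [prod_ite_mem, univ_inter, prod_ite, prod_const, prod_const, filter_mem_eq_inter,
          inter_eq_right.2 hS, filter_notMem_eq_sdiff, card_sdiff_of_subset hS]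

lemma tsum_prod_mul_ite_card_filter_eq [DecidableEq β] {q : ι → β → ℝ≥0∞}
    (hq : ∀ i, ∑' b, q i b = 1) (B : Finset ι) {j : β} {x : ℝ≥0∞}
    (hx : ∀ i ∈ B, q i j = x) (r : ℕ) :
    ∑' k : ι → β, (∏ i, q i (k i)) * (if #{i ∈ B | k i = j} = r then 1 else 0) =
      binomialMass #B r x := by
  classical
  have hsplit (k : ι → β) : (if #{i ∈ B | k i = j} = r then 1 else 0 : ℝ≥0∞) =
      ∑ S ∈ powersetCard r B, if {i ∈ B | k i = j} = S then 1 else 0 := by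
    rw [sum_ite_eq]
    simp [mem_powersetCard]
  simp only [hsplit, mul_sum]
  rw [Summable.tsum_finsetSum fun _ _ => ENNReal.summable]
  calc ∑ S ∈ powersetCard r B, ∑' k : ι → β,
          (∏ i, q i (k i)) * (if {i ∈ B | k i = j} = S then 1 else 0)
      = ∑ S ∈ powersetCard r B, x ^ r * (1 - x) ^ (#B - r) := by
        refine sum_congr rfl fun S hS => ?_
        obtain ⟨hSB, hcard⟩ := mem_powersetCard.1 hS
        rw [tsum_prod_mul_ite_filter_eq hq hSB hx, hcard]
    _ = binomialMass #B r x := by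
        rw [sum_const, card_powersetCard, nsmul_eq_mul, binomialMass, mul_assoc]

end ProductSums

section DiscreteMaps

variable {Ω T : Type*} [MeasurableSpace Ω] {μ : Measure Ω} [IsFiniteMeasure μ]

lemma nullMeasurableSet_of_measure_add_measure_compl_le {s : Set Ω}
    (h : μ s + μ sᶜ ≤ μ Set.univ) : NullMeasurableSet s μ := by
  let t := toMeasurable μ s
  let u := toMeasurable μ sᶜ
  have hu : MeasurableSet u := measurableSet_toMeasurable μ sᶜ
  have hst : s ⊆ t := subset_toMeasurable μ s
  have hus : uᶜ ⊆ s := Set.compl_subset_comm.1 (subset_toMeasurable μ sᶜ)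
  have hle : μ t ≤ μ uᶜ := by
    rw [measure_compl hu (measure_ne_top μ u), measure_toMeasurable, measure_toMeasurable]
    exact ENNReal.le_sub_of_add_le_right (measure_ne_top μ _) h
  have hut : (uᶜ : Set Ω) =ᵐ[μ] t :=
    ae_eq_of_subset_of_measure_ge (hus.trans hst) hle hu.compl.nullMeasurableSet
      (measure_ne_top μ t)
  exact (measurableSet_toMeasurable μ s).nullMeasurableSet.congr
    ((hut.symm.le.trans hus.eventuallyLE).antisymm hst.eventuallyLE)

variable [Countable T] {W : Ω → T}

lemma nullMeasurableSet_preimage_of_tsum_fiber_le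
    (hW : ∑' t, μ (W ⁻¹' {t}) ≤ μ Set.univ) (s : Set T) : NullMeasurableSet (W ⁻¹' s) μ := by
  have hle (s : Set T) : μ (W ⁻¹' s) ≤ ∑' t : s, μ (W ⁻¹' {(t : T)}) := by
    rw [← Set.biUnion_preimage_singleton]
    exact measure_biUnion_le μ s.to_countable _
  refine nullMeasurableSet_of_measure_add_measure_compl_le (le_trans ?_ hW)
  rw [← ENNReal.summable.tsum_add_tsum_compl (s := s) ENNReal.summable, ← Set.preimage_compl]
  exact add_le_add (hle s) (hle sᶜ)

lemma lintegral_comp_eq_tsum_measure_fiber_mul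
    (hW : ∑' t, μ (W ⁻¹' {t}) ≤ μ Set.univ) (f : T → ℝ≥0∞) :
    ∫⁻ ω, f (W ω) ∂μ = ∑' t, μ (W ⁻¹' {t}) * f t := by
  let _ : MeasurableSpace T := ⊤
  have hmeas : AEMeasurable W μ :=
    NullMeasurable.aemeasurable fun s _ => nullMeasurableSet_preimage_of_tsum_fiber_le hW s
  rw [← lintegral_map' (f := f) (Measurable.of_discrete).aemeasurable hmeas, lintegral_countable']
  refine tsum_congr fun t => ?_
  rw [Measure.map_apply_of_aemeasurable hmeas .of_discrete, mul_comm]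

lemma measure_setOf_comp_eq_tsum_measure_fiber_mul
    (hW : ∑' t, μ (W ⁻¹' {t}) ≤ μ Set.univ) (s : T → Prop) [DecidablePred s] :
    μ {ω | s (W ω)} = ∑' t, μ (W ⁻¹' {t}) * if s t then 1 else 0 := by
  rw [← lintegral_comp_eq_tsum_measure_fiber_mul hW fun t => if s t then 1 else 0,
    ← Set.preimage_ofPred_eq (p := s),
    ← lintegral_indicator_one₀ (nullMeasurableSet_preimage_of_tsum_fiber_le hW {t | s t})]
  refine lintegral_congr fun ω => ?_
  by_cases h : s (W ω) <;> simp [h]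

end DiscreteMaps

section RegimeSwitching

/-- The number of earlier coordinates of a word equal to its last one. For the word
`Z_1, …, Z_{n+1}` this is the paper's `𝓛_n`, and for the regimes `X_1, …, X_{n+1}` it is `L_n`. -/
def repeatCount {T : Type*} [DecidableEq T] {n : ℕ} (z : Fin (n + 1) → T) : ℕ :=
  #{i : Fin n | z i.castSucc = z (Fin.last n)}

lemma sum_range_ite_eq_repeatCount {T : Type*} [DecidableEq T] (z : ℕ → T) (n : ℕ) :
    (∑ i ∈ range n, if z i = z n then 1 else 0) = repeatCount fun i : Fin (n + 1) => z i := by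
  simp only [repeatCount, sum_range, card_filter, Fin.val_castSucc, Fin.val_last]

variable {A K : Type*}

section Conditional

variable [DecidableEq A] [DecidableEq K] {p : A → K → ℝ≥0∞} {n : ℕ}

lemma tsum_prod_mul_ite_repeatCount_eq (hp : ∀ a, ∑' k, p a k = 1) (a : Fin (n + 1) → A) (r : ℕ) :
    ∑' k : Fin (n + 1) → K, (∏ i, p (a i) (k i)) *
        (if repeatCount (fun i => (a i, k i)) = r then 1 else 0) =
      ∑' j, p (a (Fin.last n)) j *
        binomialMass (repeatCount a) r (p (a (Fin.last n)) j) := by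
  rw [tsum_eq_tsum_tsum_snoc]
  refine tsum_congr fun j => ?_
  let B : Finset (Fin n) := {i | a i.castSucc = a (Fin.last n)}
  have hB : ∀ i ∈ B, p (a i.castSucc) j = p (a (Fin.last n)) j := fun i hi => by
    rw [(mem_filter.1 hi).2]
  rw [repeatCount, ← tsum_prod_mul_ite_card_filter_eq (fun i => hp (a i.castSucc)) B hB r,
    ← ENNReal.tsum_mul_left]
  refine tsum_congr fun k => ?_
  simp only [repeatCount, Fin.prod_univ_castSucc, Fin.snoc_castSucc, Fin.snoc_last, Prod.mk.injEq,
    B, filter_filter]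
  ring

lemma tsum_prod_mul_ite_repeatCount_le {α : ℝ} {ℓ : ℝ → ℝ} (hp : ∀ a, ∑' k, p a k = 1)
    (hν : ∀ a, TailCountBound (p a) α ℓ) (hα : α ∈ Set.Icc (0 : ℝ) 1)
    (hℓ : AntitoneOn ℓ (Set.Ioi 0)) (a : Fin (n + 1) → A) (r : ℕ) :
    ∑' k : Fin (n + 1) → K, (∏ i, p (a i) (k i)) *
        (if repeatCount (fun i => (a i, k i)) = r then 1 else 0) ≤
      cOne α r * (if r < repeatCount a then
          ENNReal.ofReal ((repeatCount a : ℝ) ^ (-(1 - α)) * ℓ (repeatCount a)) else 0) +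
        cTwo α r ℓ (⨆ a, ⨆ k, p a k) * (if repeatCount a = r then 1 else 0) := by
  rw [tsum_prod_mul_ite_repeatCount_eq hp]
  exact (hν _).tsum_mul_binomialMass_le (hp _) hα hℓ (fun k => le_iSup₂_of_le _ k le_rfl) _ r

end Conditional

section Law

variable {Ω ι : Type*} [MeasurableSpace Ω] [Fintype ι]

/-- The regime switching model on a finite set `ι` of times: the regimes `X` have point masses
`w`, and given `X = a` the second coordinates `Y i` are independent with laws `p (a i)`. The law
is prescribed on points only, so that no measurability of `X` and `Y` has to be assumed. -/
structure IsRegimeSwitching (P : Measure Ω) (X : Ω → ι → A) (Y : Ω → ι → K)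
    (w : (ι → A) → ℝ≥0∞) (p : A → K → ℝ≥0∞) : Prop where
  tsum_regime : ∑' a, w a = 1
  tsum_atom : ∀ a, ∑' k, p a k = 1
  measure_path : ∀ a k, P {ω | X ω = a ∧ Y ω = k} = w a * ∏ i, p (a i) (k i)

namespace IsRegimeSwitching

variable {P : Measure Ω} {X : Ω → ι → A} {Y : Ω → ι → K} {w : (ι → A) → ℝ≥0∞}
  {p : A → K → ℝ≥0∞}

lemma tsum_prod_atom (h : IsRegimeSwitching P X Y w p) (a : ι → A) :
    ∑' k : ι → K, ∏ i, p (a i) (k i) = 1 := by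
  rw [tsum_prod_eq_prod_tsum fun i => p (a i)]
  exact prod_eq_one fun i _ => h.tsum_atom (a i)

lemma tsum_measure_fiber_mul (h : IsRegimeSwitching P X Y w p)
    (f : (ι → A) × (ι → K) → ℝ≥0∞) :
    ∑' z, P ((fun ω => (X ω, Y ω)) ⁻¹' {z}) * f z =
      ∑' a, w a * ∑' k, (∏ i, p (a i) (k i)) * f (a, k) := by
  have hfiber (a : ι → A) (k : ι → K) :
      P ((fun ω => (X ω, Y ω)) ⁻¹' {(a, k)}) = w a * ∏ i, p (a i) (k i) := by
    simpa only [Set.preimage, Set.mem_singleton_iff, Prod.mk.injEq] using h.measure_path a k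
  rw [ENNReal.tsum_prod']
  simp only [hfiber, mul_assoc, ENNReal.tsum_mul_left]

variable [IsProbabilityMeasure P]

lemma tsum_measure_fiber_le (h : IsRegimeSwitching P X Y w p) :
    ∑' z, P ((fun ω => (X ω, Y ω)) ⁻¹' {z}) ≤ P Set.univ := by
  simpa [h.tsum_prod_atom, h.tsum_regime] using (h.tsum_measure_fiber_mul fun _ => 1).le

variable [Countable A] [Countable K]

lemma measure_path_eq (h : IsRegimeSwitching P X Y w p) (s : (ι → A) → (ι → K) → Prop)
    [∀ a k, Decidable (s a k)] :
    P {ω | s (X ω) (Y ω)} =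
      ∑' a, w a * ∑' k, (∏ i, p (a i) (k i)) * if s a k then 1 else 0 := by
  rw [← h.tsum_measure_fiber_mul fun z => if s z.1 z.2 then 1 else 0]
  exact measure_setOf_comp_eq_tsum_measure_fiber_mul h.tsum_measure_fiber_le
    fun z => s z.1 z.2

lemma measure_regime_eq (h : IsRegimeSwitching P X Y w p) (s : (ι → A) → Prop)
    [DecidablePred s] :
    P {ω | s (X ω)} = ∑' a, w a * if s a then 1 else 0 := by
  simpa only [ENNReal.tsum_mul_right, h.tsum_prod_atom, one_mul] using
    h.measure_path_eq fun a _ => s a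

lemma lintegral_regime_eq (h : IsRegimeSwitching P X Y w p) (g : (ι → A) → ℝ≥0∞) :
    ∫⁻ ω, g (X ω) ∂P = ∑' a, w a * g a := by
  rw [lintegral_comp_eq_tsum_measure_fiber_mul h.tsum_measure_fiber_le fun z => g z.1,
    h.tsum_measure_fiber_mul]
  simp only [ENNReal.tsum_mul_right, h.tsum_prod_atom, one_mul]

end IsRegimeSwitching

end Law

section Transitions

/-- A word continued by the constant letter `b` to an infinite sequence, the form in which
transition probabilities take their history. -/
noncomputable def padWord {T : Type*} {N : ℕ} (b : T) (a : Fin N → T) : ℕ → T :=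
  Function.extend Fin.val a fun _ => b

lemma padWord_val {T : Type*} {N : ℕ} (b : T) (a : Fin N → T) (i : Fin N) :
    padWord b a i = a i :=
  Fin.val_injective.extend_apply _ _ i

lemma padWord_snoc_of_lt {T : Type*} {N : ℕ} (b : T) (a : Fin N → T) (c : T) {i : ℕ} (hi : i < N) :
    padWord b (Fin.snoc a c : Fin (N + 1) → T) i = padWord b a i := by
  have hsnoc := padWord_val b (Fin.snoc a c : Fin (N + 1) → T) (Fin.castSucc ⟨i, hi⟩)
  rw [Fin.snoc_castSucc] at hsnoc
  exact hsnoc.trans (padWord_val b a ⟨i, hi⟩).symm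

/-- The probability of the regime word `a` under the transition probabilities `R`, where
`R i x` is the law of the `i`-th regime given the history `x`. -/
noncomputable def pathWeight (R : ℕ → (ℕ → A) → A → ℝ≥0∞) (b : A) {N : ℕ} (a : Fin N → A) : ℝ≥0∞ :=
  ∏ i : Fin N, R i (padWord b a) (a i)

variable {R : ℕ → (ℕ → A) → A → ℝ≥0∞}

lemma pathWeight_snoc (hRdep : ∀ n, DependsOn (R n) (Set.Iio n)) (b : A) {N : ℕ}
    (a : Fin N → A) (c : A) :
    pathWeight R b (Fin.snoc a c : Fin (N + 1) → A) = pathWeight R b a * R N (padWord b a) c := by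
  have hR (i : ℕ) (hi : i ≤ N) :
      R i (padWord b (Fin.snoc a c : Fin (N + 1) → A)) = R i (padWord b a) :=
    hRdep i fun j hj => padWord_snoc_of_lt b a c (hj.trans_le hi)
  rw [pathWeight, Fin.prod_univ_castSucc, Fin.snoc_last, Fin.val_last, hR N le_rfl, pathWeight]
  congr 1
  refine prod_congr rfl fun i _ => ?_
  rw [Fin.snoc_castSucc, Fin.val_castSucc, hR i i.is_le']

lemma tsum_pathWeight (hRdep : ∀ n, DependsOn (R n) (Set.Iio n))
    (hRsum : ∀ n a, ∑' c, R n a c = 1) (b : A) (N : ℕ) :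
    ∑' a : Fin N → A, pathWeight R b a = 1 := by
  induction N with
  | zero => simp [tsum_fintype, pathWeight]
  | succ N ih =>
    rw [tsum_eq_tsum_tsum_snoc, ENNReal.tsum_comm]
    simp only [pathWeight_snoc hRdep, ENNReal.tsum_mul_left, hRsum, mul_one, ih]

lemma isRegimeSwitching_of_transitions {Ω : Type*} [MeasurableSpace Ω] {P : Measure Ω}
    {Z : ℕ → Ω → A × K} {p : A → K → ℝ≥0∞} (hp : ∀ a, ∑' k, p a k = 1)
    (hRdep : ∀ n, DependsOn (R n) (Set.Iio n))
    (hRsum : ∀ n a, ∑' c, R n a c = 1) {n : ℕ}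
    (hZ : ∀ (a : ℕ → A) (k : ℕ → K),
      P (⋂ i ∈ range (n + 1), {ω | Z i ω = (a i, k i)}) =
        (∏ i ∈ range (n + 1), R i a (a i)) * ∏ i ∈ range (n + 1), p (a i) (k i))
    (z : A × K) :
    IsRegimeSwitching P (fun ω (i : Fin (n + 1)) => (Z i ω).1) (fun ω i => (Z i ω).2)
      (pathWeight R z.1) p where
  tsum_regime := tsum_pathWeight hRdep hRsum z.1 (n + 1)
  tsum_atom := hp
  measure_path a k := by
    have hevent : {ω | (fun i : Fin (n + 1) => (Z i ω).1) = a ∧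
          (fun i : Fin (n + 1) => (Z i ω).2) = k} =
        ⋂ i ∈ range (n + 1), {ω | Z i ω = (padWord z.1 a i, padWord z.2 k i)} := by
      ext ω
      have hword : ((fun i : Fin (n + 1) => (Z i ω).1) = a ∧
          (fun i : Fin (n + 1) => (Z i ω).2) = k) ↔
            ∀ i : Fin (n + 1), Z i ω = (padWord z.1 a i, padWord z.2 k i) := by
        simp only [padWord_val, funext_iff, Prod.ext_iff, forall_and]
      simp only [Set.mem_ofPred_eq, Set.mem_iInter, mem_range, hword, Fin.forall_iff]
    rw [hevent, hZ, prod_range, prod_range]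
    simp only [padWord_val, pathWeight]

end Transitions

theorem regime_switching_RV_bound_general {Ω : Type*} [MeasurableSpace Ω] {P : Measure Ω}
    [IsProbabilityMeasure P] [Countable A] [DecidableEq A] [Countable K] [DecidableEq K]
    {p : A → K → ℝ≥0∞} {n : ℕ} {w : (Fin (n + 1) → A) → ℝ≥0∞}
    {X : Ω → Fin (n + 1) → A} {Y : Ω → Fin (n + 1) → K} (h : IsRegimeSwitching P X Y w p)
    {α : ℝ} (hα : α ∈ Set.Icc (0 : ℝ) 1) {ℓ : ℝ → ℝ} (hℓ : AntitoneOn ℓ (Set.Ioi 0))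
    (hν : ∀ a, TailCountBound (p a) α ℓ) (r : ℕ) :
    P {ω | repeatCount (fun i => (X ω i, Y ω i)) = r} ≤
      cOne α r * (∫⁻ ω, (if r < repeatCount (X ω) then
          ENNReal.ofReal ((repeatCount (X ω) : ℝ) ^ (-(1 - α)) * ℓ (repeatCount (X ω)))
          else 0) ∂P) +
        cTwo α r ℓ (⨆ a, ⨆ k, p a k) * P {ω | repeatCount (X ω) = r} := by
  let g (a : Fin (n + 1) → A) : ℝ≥0∞ := if r < repeatCount a then
    ENNReal.ofReal ((repeatCount a : ℝ) ^ (-(1 - α)) * ℓ (repeatCount a)) else 0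
  calc P {ω | repeatCount (fun i => (X ω i, Y ω i)) = r}
      = ∑' a, w a * ∑' k : Fin (n + 1) → K, (∏ i, p (a i) (k i)) *
          if repeatCount (fun i => (a i, k i)) = r then 1 else 0 :=
        h.measure_path_eq fun a k => repeatCount (fun i => (a i, k i)) = r
    _ ≤ ∑' a, w a * (cOne α r * g a +
          cTwo α r ℓ (⨆ a, ⨆ k, p a k) * if repeatCount a = r then 1 else 0) := by
        gcongr with a
        exact tsum_prod_mul_ite_repeatCount_le h.tsum_atom hν hα hℓ a r
    _ = cOne α r * (∑' a, w a * g a) +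
          cTwo α r ℓ (⨆ a, ⨆ k, p a k) * ∑' a, w a * if repeatCount a = r then 1 else 0 := by
        simp only [mul_add, ENNReal.tsum_add, mul_left_comm (w _), ENNReal.tsum_mul_left]
    _ = _ := by rw [← h.lintegral_regime_eq g, ← h.measure_regime_eq fun a => repeatCount a = r]

end RegimeSwitching

/-- Proposition 4.1: in the regime switching model, if
`ν(a,ε) ≤ ε^{−α}ℓ(1/ε)` for all `a` and `ε ∈ (0,1]` with `α ∈ [0,1]` and `ℓ`
non-increasing and slowly varying, then
`P{𝓛_n = r} ≤ c₁(α,r) E[1{L_n > r} L_n^{−(1−α)} ℓ(L_n)] + c₂(α,r) P{L_n = r}`,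
with `p_∨ = sup p_{a,k}`. (Indexed from 0.) -/
theorem regime_switching_RV_bound {A : Type*} [Countable A] [DecidableEq A]
    {Ω : Type*} [MeasurableSpace Ω] (P : Measure Ω) [IsProbabilityMeasure P]
    (Z : ℕ → Ω → A × ℕ)
    (p : A → ℕ → ℝ≥0∞) (hp : ∀ a, ∑' k, p a k = 1)
    (R : ℕ → (ℕ → A) → A → ℝ≥0∞)
    (hRdep : ∀ (n : ℕ) (a a' : ℕ → A), (∀ i < n, a i = a' i) → R n a = R n a')
    (hRsum : ∀ (n : ℕ) (a : ℕ → A), ∑' b, R n a b = 1)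
    (hZ : ∀ (n : ℕ) (a : ℕ → A) (k : ℕ → ℕ),
      P (⋂ i ∈ Finset.range (n + 1), {ω | Z i ω = (a i, k i)}) =
        (∏ i ∈ Finset.range (n + 1), R i a (a i)) *
          ∏ i ∈ Finset.range (n + 1), p (a i) (k i))
    (α : ℝ) (hα : α ∈ Set.Icc (0 : ℝ) 1)
    (ℓ : ℝ → ℝ) (hsv : SlowlyVarying ℓ) (hmono : AntitoneOn ℓ (Set.Ioi 0))
    (hν : ∀ a : A, ∀ ε : ℝ, ε ∈ Set.Ioc (0 : ℝ) 1 →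
      nuCount p a ε ≤ ENNReal.ofReal (ε ^ (-α) * ℓ (1 / ε)))
    (n r : ℕ) (hn : 1 ≤ n) (hr : r ≤ n - 1) :
    P {ω | (∑ i ∈ Finset.range n, if Z i ω = Z n ω then 1 else 0 : ℕ) = r} ≤
      cOne α r * (∫⁻ ω,
          (if r < (∑ i ∈ Finset.range n, if (Z i ω).1 = (Z n ω).1 then 1 else 0 : ℕ) then
            ENNReal.ofReal
              (((∑ i ∈ Finset.range n, if (Z i ω).1 = (Z n ω).1 then 1 else 0 : ℕ) : ℝ)
                  ^ (-(1 - α)) *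
                ℓ ((∑ i ∈ Finset.range n, if (Z i ω).1 = (Z n ω).1 then 1 else 0 : ℕ) : ℝ))
          else 0) ∂P) +
        cTwo α r ℓ (⨆ a : A, ⨆ k : ℕ, p a k) *
          P {ω | (∑ i ∈ Finset.range n, if (Z i ω).1 = (Z n ω).1 then 1 else 0 : ℕ) = r} := by
  obtain ⟨ω⟩ : Nonempty Ω := nonempty_of_isProbabilityMeasure P
  have hmodel := isRegimeSwitching_of_transitions hp (fun i _ _ => hRdep i _ _) hRsum (hZ n) (Z 0 ω)
  simpa only [sum_range_ite_eq_repeatCount] using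
    regime_switching_RV_bound_general hmodel hα hmono
      (fun a ε hε => nuCount_eq_encard p a ε ▸ hν a ε hε) r
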